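/- arXiv:math/9411212 — 3 statements merged into one kernel-verified Lean document; each statement's English description precedes it below -/
import Mathlib

section
/- For every prime q, the number m₄(-q) of quartic number fields of discriminant -q is O(q^{7/8} (log q)^4), with an absolute implied constant. -/
/-- The predicate that a subfield `K` of `ℂ` is a quartic number field of discriminant
`-q`.  (Every number field embeds into `ℂ`, so every quartic field of discriminant `-q`
is isomorphic to such a subfield.) -/
def IsQuarticOfDisc (q : ℕ) (K : Subfield ℂ) : Prop :=
  Module.finrank ℚ K = 4 ∧ ∀ [NumberField K], NumberField.discr K = -(q : ℤ)

/-- Two such subfields are identified when they are isomorphic as fields, so that the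
equivalence classes are exactly the isomorphism classes of quartic number fields of
discriminant `-q`. -/
def quarticSetoid (q : ℕ) : Setoid {K : Subfield ℂ // IsQuarticOfDisc q K} :=
  ⟨fun K L => Nonempty (K.1 ≃+* L.1),
    ⟨fun _ => ⟨RingEquiv.refl _⟩, fun ⟨e⟩ => ⟨e.symm⟩, fun ⟨e⟩ ⟨e'⟩ => ⟨e.trans e'⟩⟩⟩

/-- The number `m₄(-q)` of isomorphism classes of quartic number fields of
discriminant `-q`. -/
noncomputable def m₄ (q : ℕ) : ℕ := Nat.card (Quotient (quarticSetoid q))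

/-!
A quartic field of negative discriminant `-n` has an odd number of complex places, hence two real
places and one complex place. Minkowski's theorem, applied to a box of side `1` at a real place
and `n^(1/6)` at the others, yields an irrational integer all of whose conjugates are
`O(n^(1/6))`. Subtracting its trace from four times this integer gives an element of trace zero,
and it generates the field, since a field of squarefree discriminant has no proper intermediate
field. Its minimal polynomial `X⁴ + pX² + rX + s` determines the field and satisfies
`p = O(n^(1/3))`, `r = O(n^(1/2))` and `s = O(n)`. For given `p` and `r` the discriminant of this
polynomial is a cubic in `s` that `n` must divide, so that `s` lies in at most three residue
classes modulo each prime factor of `n`. For prime `n` this leaves `O(n^(5/6))` polynomials.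
-/

/-! ### Small generators of trace zero -/

section

open NumberField InfinitePlace mixedEmbedding IntermediateField Module
open scoped NNReal

variable {K : Type*} [Field K] [NumberField K]

lemma minkowskiBound_lt_of_nrComplexPlaces_ne_zero (hc : nrComplexPlaces K ≠ 0) :
    minkowskiBound K ↑1 < convexBodyLTFactor K * NNReal.sqrt ‖discr K‖₊ := by
  have hsqrt : 0 < NNReal.sqrt ‖discr K‖₊ := by simp [discr_ne_zero]
  have hpow : (2 : ℝ≥0) ^ nrComplexPlaces K < NNReal.pi ^ nrComplexPlaces K := by
    gcongr
    exact Real.pi_gt_three.trans' (by norm_num)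
  have htwo : (2⁻¹ : ℝ≥0) ^ nrComplexPlaces K * 2 ^ finrank ℚ K =
      2 ^ nrRealPlaces K * 2 ^ nrComplexPlaces K := by
    rw [← card_add_two_mul_card_eq_rank K, pow_add, two_mul, pow_add, inv_pow]
    field_simp
  rw [minkowskiBound, volume_fundamentalDomain_fractionalIdealLatticeBasis, Units.val_one,
    FractionalIdeal.absNorm_one, Rat.cast_one, ENNReal.ofReal_one, one_mul, mixedEmbedding.finrank,
    volume_fundamentalDomain_latticeBasis, mul_right_comm, convexBodyLTFactor]
  calc (2⁻¹ : ENNReal) ^ nrComplexPlaces K * 2 ^ finrank ℚ K * NNReal.sqrt ‖discr K‖₊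
      = ((2⁻¹ : ℝ≥0) ^ nrComplexPlaces K * 2 ^ finrank ℚ K * NNReal.sqrt ‖discr K‖₊ : ℝ≥0) := by
        simp [ENNReal.inv_pow]
    _ < (2 ^ nrRealPlaces K * NNReal.pi ^ nrComplexPlaces K * NNReal.sqrt ‖discr K‖₊ : ℝ≥0) := by
        rw [htwo]
        gcongr
    _ = _ := by simp

lemma house_le_iff_forall_infinitePlace_le {x : K} {B : ℝ} :
    house x ≤ B ↔ ∀ w : InfinitePlace K, w x ≤ B := by
  rw [InfinitePlace.le_iff_le]
  exact canonicalEmbedding.norm_le_iff x B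

lemma exists_notMem_bot_house_le (w₀ : InfinitePlace K) {B : ℝ≥0} (hB1 : 1 ≤ B)
    (hB : minkowskiBound K ↑1 < convexBodyLTFactor K * (B ^ (finrank ℚ K - w₀.mult) : ℝ≥0)) :
    ∃ a : 𝓞 K, (a : K) ∉ (⊥ : IntermediateField ℚ K) ∧ house (a : K) ≤ B := by
  classical
  let f : InfinitePlace K → ℝ≥0 := fun w ↦ if w = w₀ then 1 else B
  have hf : ∀ w, f w ≤ B := fun w ↦ by grind
  have hprod : ∏ w, f w ^ w.mult = B ^ (finrank ℚ K - w₀.mult) := by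
    rw [← sum_mult_eq (K := K), ← Finset.add_sum_erase _ _ (Finset.mem_univ w₀),
      Nat.add_sub_cancel_left, ← Finset.prod_pow_eq_pow_sum,
      ← Finset.mul_prod_erase _ _ (Finset.mem_univ w₀)]
    simp only [f, if_true, one_pow, one_mul]
    exact Finset.prod_congr rfl fun w hw ↦ by rw [if_neg (Finset.ne_of_mem_erase hw)]
  obtain ⟨a, ha0, ha⟩ := exists_ne_zero_mem_ringOfIntegers_lt K (f := f)
    (by rwa [convexBodyLT_volume, hprod])
  refine ⟨a, fun hbot ↦ ?_, house_le_iff_forall_infinitePlace_le.mpr fun w ↦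
    (ha w).le.trans (mod_cast hf w)⟩
  -- A rational number has the same absolute value at all infinite places, hence a nonzero integer
  -- that is small at `w₀` cannot be rational.
  obtain ⟨x, hx⟩ := mem_bot.mp hbot
  have hconst (w : InfinitePlace K) : w (a : K) = w₀ (a : K) := by
    rw [← hx, eq_ratCast, InfinitePlace.map_ratCast, InfinitePlace.map_ratCast]
  have hlt : w₀ (a : K) < 1 := by simpa [f] using ha w₀
  exact hlt.not_ge (one_le_of_lt_one ha0 fun w _ ↦ (hconst w).trans_lt hlt)

lemma abs_trace_le_finrank_mul_house (x : K) :
    |(Algebra.trace ℚ K x : ℝ)| ≤ finrank ℚ K * house x := by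
  calc |(Algebra.trace ℚ K x : ℝ)| = ‖∑ φ : K →ₐ[ℚ] ℂ, φ x‖ := by
        rw [← trace_eq_sum_embeddings, eq_ratCast, Complex.norm_ratCast]
    _ ≤ ∑ _φ : K →ₐ[ℚ] ℂ, house x :=
        norm_sum_le_of_le _ fun φ _ ↦ norm_embedding_le_house x (φ : K →+* ℂ)
    _ = finrank ℚ K * house x := by
        rw [Finset.sum_const, Finset.card_univ, AlgHom.card, nsmul_eq_mul]

lemma exists_trace_eq_zero_house_le {a : 𝓞 K} (ha : (a : K) ∉ (⊥ : IntermediateField ℚ K)) :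
    ∃ b : 𝓞 K, (b : K) ∉ (⊥ : IntermediateField ℚ K) ∧ Algebra.trace ℚ K (b : K) = 0 ∧
      house (b : K) ≤ 2 * finrank ℚ K * house (a : K) := by
  set d := finrank ℚ K with hd
  set t : ℤ := Algebra.trace ℤ (𝓞 K) a
  have hd0 : (d : K) ≠ 0 := mod_cast finrank_pos.ne'
  have ht : (t : ℚ) = Algebra.trace ℚ K (a : K) := Algebra.coe_trace_int a
  have hb : ((d * a - t : 𝓞 K) : K) = d * (a : K) - t := by simp
  refine ⟨d * a - t, ?_, ?_, ?_⟩ <;> rw [hb]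
  · intro hbot
    refine ha ?_
    have : (a : K) = (d * (a : K) - t + t) / d := by field_simp; ring
    rw [this]
    exact div_mem (add_mem hbot (IntermediateField.intCast_mem _ t))
      (IntermediateField.natCast_mem _ d)
  · have : (d * (a : K) - t : K) = (d : ℚ) • (a : K) - algebraMap ℚ K t := by
      simp [Algebra.smul_def]
    rw [this, map_sub, map_smul, Algebra.trace_algebraMap, ← ht]
    simp [hd]
  · have htrace : |(t : ℝ)| ≤ d * house (a : K) := by
      have := abs_trace_le_finrank_mul_house (a : K)
      rwa [← ht, Rat.cast_intCast] at this
    calc house (d * (a : K) - t) = house (d * (a : K) + (-t : ℤ)) := by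
          rw [Int.cast_neg, sub_eq_add_neg]
      _ ≤ house (d * (a : K)) + house ((-t : ℤ) : K) := house_add_le _ _
      _ = d * house (a : K) + |(t : ℝ)| := by
          rw [house_nat_mul, house_intCast, abs_neg, Int.cast_abs]
      _ ≤ 2 * d * house (a : K) := by linarith

lemma eq_bot_or_eq_top_of_squarefree_discr (h : Squarefree (discr K))
    (F : IntermediateField ℚ K) : F = ⊥ ∨ F = ⊤ := by
  refine or_iff_not_imp_left.mpr fun hbot ↦ ?_
  have hFQ : 1 < finrank ℚ F :=
    (Nat.one_le_iff_ne_zero.mpr finrank_pos.ne').lt_of_ne' (mt finrank_eq_one_iff.mp hbot)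
  rw [← finrank_eq_one_iff_eq_top]
  by_contra hKF
  have hdvd : (discr F).natAbs ^ 2 ∣ (discr K).natAbs := by
    rw [natAbs_discr_eq_absNorm_differentIdeal_mul_natAbs_discr_pow F (𝓞 F) K (𝓞 K)]
    have : 0 < finrank F K := finrank_pos
    exact (pow_dvd_pow _ (by lia)).mul_left _
  have hunit := (Int.squarefree_natAbs.mpr h) _ (sq (discr F).natAbs ▸ hdvd)
  have habs := abs_discr_gt_two hFQ
  rw [Int.abs_eq_natAbs, Nat.isUnit_iff.mp hunit] at habs
  norm_num at habs

lemma exists_primitive_trace_eq_zero_house_le (hsq : Squarefree (discr K))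
    (hr : nrRealPlaces K ≠ 0) (hc : nrComplexPlaces K ≠ 0) :
    ∃ b : 𝓞 K, ℚ⟮(b : K)⟯ = ⊤ ∧ Algebra.trace ℚ K (b : K) = 0 ∧
      house (b : K) ≤ 2 * finrank ℚ K *
        |(discr K : ℝ)| ^ ((2 * (finrank ℚ K - 1 : ℝ))⁻¹) := by
  classical
  obtain ⟨w₀, hw₀⟩ : Nonempty {w : InfinitePlace K // w.IsReal} :=
    Fintype.card_pos_iff.mp (Nat.pos_of_ne_zero hr)
  have hd : 1 < finrank ℚ K := by grind [card_add_two_mul_card_eq_rank K]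
  set B : ℝ≥0 := ‖discr K‖₊ ^ ((2 * (finrank ℚ K - 1 : ℝ))⁻¹) with hB
  have hexp : 0 < (finrank ℚ K : ℝ) - 1 := by simpa using hd
  have hB1 : 1 ≤ B := by
    refine NNReal.one_le_rpow ?_ (by positivity)
    rw [← NNReal.coe_le_coe, coe_nnnorm, Int.norm_eq_abs, NNReal.coe_one, ← Int.cast_abs]
    exact_mod_cast Int.one_le_abs (discr_ne_zero K)
  have hBpow : B ^ (finrank ℚ K - w₀.mult) = NNReal.sqrt ‖discr K‖₊ := by
    rw [mult_isReal ⟨w₀, hw₀⟩, hB, ← NNReal.rpow_natCast, ← NNReal.rpow_mul, NNReal.sqrt_eq_rpow,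
      Nat.cast_sub hd.le, Nat.cast_one]
    congr 1
    field_simp
  obtain ⟨a, ha, hale⟩ := exists_notMem_bot_house_le w₀ hB1
    (hBpow ▸ minkowskiBound_lt_of_nrComplexPlaces_ne_zero hc)
  obtain ⟨b, hb, htr, hble⟩ := exists_trace_eq_zero_house_le ha
  refine ⟨b, (eq_bot_or_eq_top_of_squarefree_discr hsq _).resolve_left
    (mt adjoin_simple_eq_bot_iff.mp hb), htr, hble.trans ?_⟩
  have : (B : ℝ) = |(discr K : ℝ)| ^ ((2 * (finrank ℚ K - 1 : ℝ))⁻¹) := by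
    simp [hB, Int.norm_eq_abs]
  rw [← this]
  gcongr

end

/-! ### Depressed quartics and the field discriminant -/

section

open NumberField IntermediateField Polynomial Module

lemma nonempty_algEquiv_of_minpoly_eq {F K L : Type*} [Field F] [Field K] [Field L] [Algebra F K]
    [Algebra F L] [Algebra.IsAlgebraic F K] [Algebra.IsAlgebraic F L] {a : K} {b : L}
    (ha : F⟮a⟯ = ⊤) (hb : F⟮b⟯ = ⊤) (h : minpoly F a = minpoly F b) : Nonempty (K ≃ₐ[F] L) := by
  have ea := adjoinRootEquivAdjoin F (Algebra.IsAlgebraic.isAlgebraic a).isIntegral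
  have eb := adjoinRootEquivAdjoin F (Algebra.IsAlgebraic.isAlgebraic b).isIntegral
  rw [ha] at ea
  rw [hb, ← h] at eb
  exact ⟨(topEquiv.symm.trans ea.symm).trans (eb.trans topEquiv)⟩

lemma map_minpoly_eq_prod_algHom {F E : Type*} (A : Type*) [Field F] [Field E] [Field A]
    [Algebra F E] [Algebra F A] [FiniteDimensional F E] [Algebra.IsSeparable F E] [IsAlgClosed A]
    {x : E} (hx : F⟮x⟯ = ⊤) :
    (minpoly F x).map (algebraMap F A) = ∏ φ : E →ₐ[F] A, (X - C (φ x)) := by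
  have hinj := (Field.primitive_element_iff_algHom_eq_of_eval' F A
    (fun _ ↦ IsAlgClosed.splits _) x).mp hx
  refine eq_of_monic_of_dvd_of_natDegree_le (monic_prod_X_sub_C _ _)
    ((minpoly.monic (.of_finite F x)).map _) ?_ ?_
  · refine Finset.prod_dvd_of_coprime
      (fun φ _ ψ _ h ↦ pairwise_coprime_X_sub_C hinj h) fun φ _ ↦ ?_
    rw [dvd_iff_isRoot, IsRoot, eval_map_algebraMap, aeval_algHom_apply, minpoly.aeval, map_zero]
  · rw [natDegree_map, natDegree_finsetProd_X_sub_C_eq_card, Finset.card_univ, AlgHom.card,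
      (Field.primitive_element_iff_minpoly_natDegree_eq F x).mp hx]

variable {K : Type*} [Field K] [NumberField K]

lemma map_minpoly_int (b : 𝓞 K) :
    (minpoly ℤ (b : K)).map (algebraMap ℤ ℚ) = minpoly ℚ (b : K) :=
  (minpoly.isIntegrallyClosed_eq_field_fractions' ℚ b.isIntegral_coe).symm

lemma abs_coeff_minpoly_le_house_pow (b : 𝓞 K) (i : ℕ) :
    |((minpoly ℤ (b : K)).coeff i : ℝ)| ≤ house (b : K) ^ ((minpoly ℤ (b : K)).natDegree - i) *
      (minpoly ℤ (b : K)).natDegree.choose i := by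
  have hroots : ∀ z ∈ ((minpoly ℚ (b : K)).map (algebraMap ℚ ℂ)).roots, ‖z‖ ≤ house (b : K) := by
    intro z hz
    obtain ⟨φ, rfl⟩ := (Embeddings.range_eval_eq_rootSet_minpoly K ℂ (b : K)).symm.subset
      (by simpa [rootSet_def, aroots_def] using hz)
    exact norm_embedding_le_house _ φ
  have h := coeff_le_of_roots_le i (minpoly.monic (.of_finite ℚ (b : K)))
    (IsAlgClosed.splits _) hroots
  simpa [← map_minpoly_int, (minpoly.monic b.isIntegral_coe).natDegree_map] using h

lemma intCast_algebraDiscr {ι : Type*} [Fintype ι] [DecidableEq ι] (v : ι → 𝓞 K) :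
    (Algebra.discr ℤ v : ℚ) = Algebra.discr ℚ fun i ↦ (v i : K) := by
  rw [Algebra.discr_def, Algebra.discr_def, Int.cast_det]
  congr 1
  ext i j
  simp only [Matrix.map_apply, Algebra.traceMatrix_apply, Algebra.traceForm_apply, ← map_mul]
  exact Algebra.coe_trace_int _

lemma discr_dvd_algebraDiscr {ι : Type*} [Fintype ι] [DecidableEq ι]
    (hι : Fintype.card ι = finrank ℚ K) (v : ι → 𝓞 K) : discr K ∣ Algebra.discr ℤ v := by
  have hcard : Fintype.card (Free.ChooseBasisIndex ℤ (𝓞 K)) = Fintype.card ι := by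
    rw [← finrank_eq_card_chooseBasisIndex, RingOfIntegers.rank, hι]
  let B := (RingOfIntegers.basis K).reindex (Fintype.equivOfCardEq hcard)
  rw [← B.toMatrix_map_vecMul v, Algebra.discr_of_matrix_vecMul, discr_eq_discr]
  exact dvd_mul_left _ _

/-- The monic quartic `X⁴ + pX² + rX + s` without cubic term, which is the shape of the minimal
polynomial of a trace-zero generator of a quartic field. -/
noncomputable def depressedQuartic {R : Type*} [CommRing R] (p r s : R) : R[X] :=
  X ^ 4 + C p * X ^ 2 + C r * X + C s

/-- The discriminant of `X⁴ + pX² + rX + s`, written out over an arbitrary commutative ring so that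
it can be reduced modulo a prime or evaluated at `s = X`, where it becomes a cubic polynomial. -/
def depressedQuarticDiscr {R : Type*} [CommRing R] (p r s : R) : R :=
  256 * s ^ 3 - 128 * p ^ 2 * s ^ 2 + 144 * p * r ^ 2 * s + 16 * p ^ 4 * s - 27 * r ^ 4
    - 4 * p ^ 3 * r ^ 2

section

variable {R S : Type*} [CommRing R] [CommRing S]

lemma map_depressedQuarticDiscr (f : R →+* S) (p r s : R) :
    f (depressedQuarticDiscr p r s) = depressedQuarticDiscr (f p) (f r) (f s) := by
  simp [depressedQuarticDiscr, map_ofNat]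

lemma map_depressedQuartic (f : R →+* S) (p r s : R) :
    (depressedQuartic p r s).map f = depressedQuartic (f p) (f r) (f s) := by
  simp [depressedQuartic]

lemma natDegree_depressedQuartic [Nontrivial R] (p r s : R) :
    (depressedQuartic p r s).natDegree = 4 := by
  unfold depressedQuartic
  compute_degree!

lemma eq_depressedQuartic {f : R[X]} (hf : f.Monic) (hdeg : f.natDegree = 4)
    (h3 : f.coeff 3 = 0) : f = depressedQuartic (f.coeff 2) (f.coeff 1) (f.coeff 0) := by
  have h4 : f.coeff 4 = 1 := hdeg ▸ hf.coeff_natDegree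
  conv_lhs => rw [f.as_sum_range_C_mul_X_pow, hdeg]
  simp only [Finset.sum_range_succ, Finset.sum_range_zero, h4, h3, depressedQuartic, C_0, C_1]
  ring

lemma det_vandermonde_fin_four (x : Fin 4 → R) :
    (Matrix.vandermonde x).det = (x 1 - x 0) * (x 2 - x 0) * (x 3 - x 0) *
      ((x 2 - x 1) * (x 3 - x 1)) * (x 3 - x 2) := by
  have hIoi : Finset.Ioi (0 : Fin 4) = {1, 2, 3} ∧ Finset.Ioi (1 : Fin 4) = {2, 3} ∧
      Finset.Ioi (2 : Fin 4) = {3} ∧ Finset.Ioi (3 : Fin 4) = ∅ := by decide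
  simp [Matrix.det_vandermonde, Fin.prod_univ_four, hIoi, Finset.prod_insert, mul_assoc]

lemma det_vandermonde_sq_eq_depressedQuarticDiscr {x : Fin 4 → R} {p r s : R}
    (h : ∏ i, (X - C (x i)) = depressedQuartic p r s) :
    (Matrix.vandermonde x).det ^ 2 = depressedQuarticDiscr p r s := by
  have hexpand : ∏ i, (X - C (x i)) = X ^ 4 - C (x 0 + x 1 + x 2 + x 3) * X ^ 3
      + C (x 0 * x 1 + x 0 * x 2 + x 0 * x 3 + x 1 * x 2 + x 1 * x 3 + x 2 * x 3) * X ^ 2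
      - C (x 0 * x 1 * x 2 + x 0 * x 1 * x 3 + x 0 * x 2 * x 3 + x 1 * x 2 * x 3) * X
      + C (x 0 * x 1 * x 2 * x 3) := by
    simp only [Fin.prod_univ_four, map_add, map_mul]
    ring
  rw [hexpand, depressedQuartic] at h
  have hcoeff (k : ℕ) := congrArg (coeff · k) h
  simp only [coeff_add, coeff_sub, coeff_C_mul, coeff_X_pow, coeff_X, coeff_C] at hcoeff
  have hsum : x 3 = -(x 0 + x 1 + x 2) := by
    linear_combination -(by simpa using hcoeff 3 : _ = _)
  have hp : p = x 0 * x 1 + x 0 * x 2 + x 0 * x 3 + x 1 * x 2 + x 1 * x 3 + x 2 * x 3 := by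
    simpa using (hcoeff 2).symm
  have hr : r = -(x 0 * x 1 * x 2 + x 0 * x 1 * x 3 + x 0 * x 2 * x 3 + x 1 * x 2 * x 3) := by
    simpa using (hcoeff 1).symm
  have hs : s = x 0 * x 1 * x 2 * x 3 := by simpa using (hcoeff 0).symm
  rw [det_vandermonde_fin_four, hp, hr, hs, hsum, depressedQuarticDiscr]
  ring

end

lemma discr_dvd_depressedQuarticDiscr {b : 𝓞 K} (hb : ℚ⟮(b : K)⟯ = ⊤) {p r s : ℤ}
    (h : minpoly ℤ (b : K) = depressedQuartic p r s) : discr K ∣ depressedQuarticDiscr p r s := by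
  have hminpoly : minpoly ℚ (b : K) = depressedQuartic (p : ℚ) r s := by
    simp [← map_minpoly_int, h, map_depressedQuartic]
  have hfinrank : finrank ℚ K = 4 := by
    rw [← (Field.primitive_element_iff_minpoly_natDegree_eq ℚ (b : K)).mp hb, hminpoly,
      natDegree_depressedQuartic]
  let e : Fin 4 ≃ (K →ₐ[ℚ] ℂ) :=
    (Fintype.equivFinOfCardEq ((AlgHom.card ℚ K ℂ).trans hfinrank)).symm
  have hroots : ∏ i, (X - C (e i b)) = depressedQuartic (p : ℂ) r s := by
    rw [e.prod_comp (fun φ ↦ X - C (φ (b : K))), ← map_minpoly_eq_prod_algHom ℂ hb, hminpoly,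
      map_depressedQuartic]
    simp
  have hvandermonde : Algebra.embeddingsMatrixReindex ℚ ℂ (fun i : Fin 4 ↦ (b : K) ^ (i : ℕ)) e =
      (Matrix.vandermonde fun i ↦ e i b).transpose := by
    ext i j
    simp [Algebra.embeddingsMatrixReindex, Algebra.embeddingsMatrix, Matrix.vandermonde]
  have hdiscr : Algebra.discr ℤ (fun i : Fin 4 ↦ b ^ (i : ℕ)) = depressedQuarticDiscr p r s := by
    suffices ((Algebra.discr ℤ (fun i : Fin 4 ↦ b ^ (i : ℕ)) : ℚ) : ℂ) =
      (depressedQuarticDiscr p r s : ℤ) by exact_mod_cast this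
    rw [intCast_algebraDiscr]
    simp only [map_pow]
    rw [← eq_ratCast (algebraMap ℚ ℂ), Algebra.discr_eq_det_embeddingsMatrixReindex_pow_two ℚ ℂ _ e,
      hvandermonde, Matrix.det_transpose, det_vandermonde_sq_eq_depressedQuarticDiscr hroots]
    exact (map_depressedQuarticDiscr (Int.castRingHom ℂ) p r s).symm
  exact hdiscr ▸ discr_dvd_algebraDiscr (by simp [hfinrank]) _

lemma exists_minpoly_eq_depressedQuartic (h4 : finrank ℚ K = 4) {b : 𝓞 K}
    (hb : ℚ⟮(b : K)⟯ = ⊤) (htr : Algebra.trace ℚ K (b : K) = 0) :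
    ∃ p r s : ℤ, minpoly ℤ (b : K) = depressedQuartic p r s ∧
      |(p : ℝ)| ≤ 6 * house (b : K) ^ 2 ∧ |(r : ℝ)| ≤ 4 * house (b : K) ^ 3 ∧
      |(s : ℝ)| ≤ house (b : K) ^ 4 := by
  have hmonic := minpoly.monic b.isIntegral_coe
  have hdeg : (minpoly ℤ (b : K)).natDegree = 4 := by
    rw [← h4, ← (Field.primitive_element_iff_minpoly_natDegree_eq ℚ (b : K)).mp hb,
      ← map_minpoly_int, hmonic.natDegree_map]
  have hcoeff3 : (minpoly ℤ (b : K)).coeff 3 = 0 := by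
    have hnext : (minpoly ℤ (b : K)).nextCoeff = 0 := by
      have h := trace_eq_finrank_mul_minpoly_nextCoeff ℚ (b : K)
      rw [htr, ← map_minpoly_int, nextCoeff_map (algebraMap ℤ ℚ).injective_int] at h
      simpa [finrank_pos.ne'] using h.symm
    rwa [nextCoeff_of_natDegree_pos (by lia), hdeg] at hnext
  have hbound (i : ℕ) := hdeg ▸ abs_coeff_minpoly_le_house_pow b i
  refine ⟨_, _, _, eq_depressedQuartic hmonic hdeg hcoeff3, ?_, ?_, ?_⟩
  · simpa [mul_comm, Nat.choose] using hbound 2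
  · simpa [mul_comm] using hbound 1
  · simpa using hbound 0

end

/-! ### Counting depressed quartics -/

section

open Polynomial Finset

lemma intCast_dvd_of_forall_primeFactors_dvd {n : ℕ} (hn : Squarefree n) {a : ℤ}
    (h : ∀ p ∈ n.primeFactors, (p : ℤ) ∣ a) : (n : ℤ) ∣ a := by
  rw [← Nat.prod_primeFactors_of_squarefree hn, Int.natCast_dvd]
  exact Finset.prod_primes_dvd _ (fun p hp ↦ (Nat.prime_of_mem_primeFactors hp).prime)
    fun p hp ↦ Int.natCast_dvd.mp (h p hp)

lemma card_Icc_neg_natCast (n : ℕ) : #(Icc (-n : ℤ) n) = 2 * n + 1 := by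
  rw [Int.card_Icc]
  lia

lemma ediv_mem_Icc_of_mem_Icc_mul {n M s : ℤ} (hn : 0 < n) (hs : s ∈ Icc (-(M * n)) (M * n)) :
    s / n ∈ Icc (-M) M := by
  rw [mem_Icc] at hs ⊢
  exact ⟨(Int.le_ediv_iff_mul_le hn).mpr (by linarith [hs.1]), Int.ediv_le_of_le_mul hn hs.2⟩

lemma card_filter_dvd_eval_le {n : ℕ} (hn : Squarefree n) (f : ℤ[X]) {k : ℕ}
    (hk : ∀ p ∈ n.primeFactors, {x : ZMod p | aeval x f = 0}.ncard ≤ k) (M : ℕ) :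
    #{s ∈ Icc (-(M * n : ℤ)) (M * n) | (n : ℤ) ∣ f.eval s} ≤
      (2 * M + 1) * k ^ #n.primeFactors := by
  set S : Finset ℤ := {s ∈ Icc (-(M * n : ℤ)) (M * n) | (n : ℤ) ∣ f.eval s}
  have hn0 : (0 : ℤ) < n := mod_cast hn.ne_zero.bot_lt
  have hroot (s : S) (p : n.primeFactors) : aeval ((s : ℤ) : ZMod p) f = 0 := by
    have hdvd : (p : ℤ) ∣ f.eval (s : ℤ) :=
      (mod_cast Nat.dvd_of_mem_primeFactors p.2 : (p : ℤ) ∣ n).trans (mem_filter.mp s.2).2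
    rw [← eq_intCast (algebraMap ℤ (ZMod p)), aeval_algebraMap_apply, coe_aeval_eq_eval,
      eq_intCast, (ZMod.intCast_zmod_eq_zero_iff_dvd _ _).mpr hdvd]
  -- As `n` is squarefree, an integer is determined by its quotient by `n` and its residues
  -- modulo the primes dividing `n`.
  let residues (s : S) :
      Icc (-M : ℤ) M × ((p : n.primeFactors) → {x : ZMod p | aeval x f = 0}) :=
    (⟨s / n, ediv_mem_Icc_of_mem_Icc_mul hn0 (mem_filter.mp s.2).1⟩, fun p ↦ ⟨s, hroot s p⟩)
  have hinj : Function.Injective residues := by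
    intro s t hst
    simp only [residues, Prod.mk.injEq, Subtype.mk.injEq, funext_iff] at hst
    have hdvd : (n : ℤ) ∣ t - s := intCast_dvd_of_forall_primeFactors_dvd hn fun p hp ↦
      (ZMod.intCast_eq_intCast_iff_dvd_sub _ _ p).mp (hst.2 ⟨p, hp⟩)
    have hmod : (s : ℤ) % n = t % n := Int.modEq_iff_dvd.mpr hdvd
    rw [Subtype.ext_iff, ← Int.ediv_mul_add_emod s n, hst.1, hmod, Int.ediv_mul_add_emod]
  have (p : n.primeFactors) : NeZero (p : ℕ) := ⟨(Nat.pos_of_mem_primeFactors p.2).ne'⟩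
  calc #S = Nat.card S := by rw [Nat.card_eq_fintype_card, Fintype.card_coe]
    _ ≤ Nat.card (Icc (-M : ℤ) M × ((p : n.primeFactors) → {x : ZMod p | aeval x f = 0})) :=
        Nat.card_le_card_of_injective _ hinj
    _ = (2 * M + 1) * ∏ p : n.primeFactors, {x : ZMod p | aeval x f = 0}.ncard := by
        rw [Nat.card_prod, Nat.card_pi, Nat.card_eq_fintype_card, Fintype.card_coe,
          card_Icc_neg_natCast]
        rfl
    _ ≤ (2 * M + 1) * k ^ #n.primeFactors := by
        gcongr
        rw [← Fintype.card_coe, ← card_univ]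
        exact prod_le_pow_card _ _ _ fun p _ ↦ hk p p.2

lemma aeval_depressedQuarticDiscr {R A : Type*} [CommRing R] [CommRing A] [Algebra R A] (p r : R)
    (x : A) : aeval x (depressedQuarticDiscr (C p) (C r) X) =
      depressedQuarticDiscr (algebraMap R A p) (algebraMap R A r) x := by
  simpa using map_depressedQuarticDiscr (aeval x : R[X] →ₐ[R] A).toRingHom (C p) (C r) X

lemma ncard_depressedQuarticDiscr_eq_zero_le {F : Type*} [CommRing F] [IsDomain F]
    (h2 : (2 : F) ≠ 0) (p r : F) : {s | depressedQuarticDiscr p r s = 0}.ncard ≤ 3 := by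
  set f : F[X] := depressedQuarticDiscr (C p) (C r) X with hf
  have hdeg : f.natDegree = 3 := by
    have h256 : (256 : F) ≠ 0 := by
      convert pow_ne_zero 8 h2
      norm_num
    have hcubic : f = Cubic.toPoly ⟨256, -128 * p ^ 2, 144 * p * r ^ 2 + 16 * p ^ 4,
        -27 * r ^ 4 - 4 * p ^ 3 * r ^ 2⟩ := by
      simp only [hf, depressedQuarticDiscr, Cubic.toPoly, map_add, map_sub, map_mul, map_neg,
        map_pow, map_ofNat]
      ring
    rw [hcubic, Cubic.natDegree_of_a_ne_zero' h256]
  have hf0 : f ≠ 0 := by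
    intro h0
    simp [h0] at hdeg
  calc {s | depressedQuarticDiscr p r s = 0}.ncard = (f.rootSet F).ncard := by
        congr 1
        ext s
        rw [mem_rootSet_of_ne hf0, hf, aeval_depressedQuarticDiscr]
        rfl
    _ ≤ 3 := hdeg ▸ ncard_rootSet_le f F

lemma ncard_aeval_depressedQuarticDiscr_eq_zero_le (p r : ℤ) (ℓ : ℕ) [Fact ℓ.Prime] :
    {x : ZMod ℓ | aeval x (depressedQuarticDiscr (C p) (C r) X) = 0}.ncard ≤ 3 := by
  simp only [aeval_depressedQuarticDiscr]
  by_cases h2 : ℓ = 2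
  · subst h2
    exact (Set.ncard_le_card _).trans (by simp)
  · have htwo : (2 : ZMod ℓ) ≠ 0 := Ring.two_ne_zero (by rwa [ZMod.ringChar_zmod_n])
    exact ncard_depressedQuarticDiscr_eq_zero_le htwo _ _

/-- The coefficient triples `⟨(p, r), s⟩` with `|p| ≤ P`, `|r| ≤ Q`, `|s| ≤ M * n` for which `n`
divides the discriminant of `X⁴ + pX² + rX + s`. They are fibred over `(p, r)` because it is the
number of admissible `s` for given `(p, r)` that can be bounded. -/
noncomputable def depressedCoeffs (n P Q M : ℕ) : Finset (Σ _ : ℤ × ℤ, ℤ) :=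
  (Icc (-P : ℤ) P ×ˢ Icc (-Q : ℤ) Q).sigma fun u ↦
    {s ∈ Icc (-(M * n : ℤ)) (M * n) | (n : ℤ) ∣ depressedQuarticDiscr u.1 u.2 s}

lemma mem_Icc_neg_natFloor {x : ℝ} {k : ℤ} (h : |(k : ℝ)| ≤ x) : k ∈ Icc (-⌊x⌋₊ : ℤ) ⌊x⌋₊ := by
  rw [mem_Icc, ← abs_le, Int.abs_eq_natAbs]
  exact_mod_cast Nat.le_floor (by rwa [Nat.cast_natAbs, Int.cast_abs])

lemma mem_depressedCoeffs_natFloor {n M : ℕ} {p r s : ℤ} {x y : ℝ} (hp : |(p : ℝ)| ≤ x)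
    (hr : |(r : ℝ)| ≤ y) (hs : |(s : ℝ)| ≤ M * n) (hdvd : (n : ℤ) ∣ depressedQuarticDiscr p r s) :
    ⟨(p, r), s⟩ ∈ depressedCoeffs n ⌊x⌋₊ ⌊y⌋₊ M := by
  simp only [depressedCoeffs, mem_sigma, mem_product, mem_filter]
  exact ⟨⟨mem_Icc_neg_natFloor hp, mem_Icc_neg_natFloor hr⟩,
    mem_Icc.mpr (abs_le.mp (mod_cast hs)), hdvd⟩

lemma card_depressedCoeffs_le {n : ℕ} (hn : Squarefree n) (P Q M : ℕ) :
    #(depressedCoeffs n P Q M) ≤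
      (2 * P + 1) * (2 * Q + 1) * ((2 * M + 1) * 3 ^ #n.primeFactors) := by
  rw [depressedCoeffs, card_sigma, ← card_Icc_neg_natCast P, ← card_Icc_neg_natCast Q,
    ← card_product]
  refine sum_le_card_nsmul _ _ _ fun u _ ↦ ?_
  have heval (s : ℤ) : depressedQuarticDiscr u.1 u.2 s =
      (depressedQuarticDiscr (C u.1) (C u.2) X).eval s :=
    (aeval_depressedQuarticDiscr u.1 u.2 s).symm
  simp only [heval]
  refine card_filter_dvd_eval_le hn _ (fun p hp ↦ ?_) M
  have : Fact p.Prime := ⟨Nat.prime_of_mem_primeFactors hp⟩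
  exact ncard_aeval_depressedQuarticDiscr_eq_zero_le _ _ p

end

/-! ### Counting quartic fields -/

section

open NumberField InfinitePlace IntermediateField Module Finset

section

variable {K : Type*} [Field K] [NumberField K] {n : ℕ}

lemma odd_nrComplexPlaces_of_discr_neg (h : discr K < 0) : Odd (nrComplexPlaces K) := by
  by_contra heven
  have hsign := sign_discr (K := K)
  rw [Int.sign_eq_neg_one_of_neg h, (Nat.not_odd_iff_even.mp heven).neg_one_pow] at hsign
  exact absurd hsign (by decide)

lemma nrRealPlaces_ne_zero_of_four_dvd_finrank (h4 : 4 ∣ finrank ℚ K) (h : discr K < 0) :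
    nrRealPlaces K ≠ 0 := by
  have := card_add_two_mul_card_eq_rank K
  grind [odd_nrComplexPlaces_of_discr_neg h]

lemma exists_primitive_trace_eq_zero_house_le_rpow (hn : Squarefree n) (h4 : finrank ℚ K = 4)
    (hd : discr K = -(n : ℤ)) :
    ∃ b : 𝓞 K, ℚ⟮(b : K)⟯ = ⊤ ∧ Algebra.trace ℚ K (b : K) = 0 ∧
      house (b : K) ≤ 8 * (n : ℝ) ^ (1 / 6 : ℝ) := by
  have hneg : discr K < 0 := by
    rw [hd]
    exact neg_neg_of_pos (mod_cast hn.ne_zero.bot_lt)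
  have hsq : Squarefree (discr K) := by
    rwa [← Int.squarefree_natAbs, hd, Int.natAbs_neg, Int.natAbs_natCast]
  obtain ⟨b, hb, htr, hhouse⟩ := exists_primitive_trace_eq_zero_house_le hsq
    (nrRealPlaces_ne_zero_of_four_dvd_finrank h4.symm.dvd hneg)
    (odd_nrComplexPlaces_of_discr_neg hneg).pos.ne'
  refine ⟨b, hb, htr, hhouse.trans_eq ?_⟩
  rw [h4, hd, Int.cast_neg, abs_neg, Int.cast_natCast, Nat.abs_cast]
  norm_num

lemma exists_minpoly_eq_depressedQuartic_mem_depressedCoeffs (hn : Squarefree n)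
    (h4 : finrank ℚ K = 4) (hd : discr K = -(n : ℤ)) :
    ∃ t ∈ depressedCoeffs n ⌊384 * (n : ℝ) ^ (1 / 3 : ℝ)⌋₊ ⌊2048 * (n : ℝ) ^ (1 / 2 : ℝ)⌋₊ 4096,
      ∃ b : K, ℚ⟮b⟯ = ⊤ ∧ minpoly ℚ b = depressedQuartic (t.1.1 : ℚ) t.1.2 t.2 := by
  obtain ⟨b, hb, htr, hhouse⟩ := exists_primitive_trace_eq_zero_house_le_rpow hn h4 hd
  obtain ⟨p, r, s, hmin, hp, hr, hs⟩ := exists_minpoly_eq_depressedQuartic h4 hb htr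
  have hdvd : (n : ℤ) ∣ depressedQuarticDiscr p r s := by
    simpa [hd] using discr_dvd_depressedQuarticDiscr hb hmin
  have hpow (k : ℕ) : house (b : K) ^ k ≤ 8 ^ k * (n : ℝ) ^ (k / 6 : ℝ) := by
    calc house (b : K) ^ k ≤ (8 * (n : ℝ) ^ (1 / 6 : ℝ)) ^ k :=
          pow_le_pow_left₀ (house_nonneg _) hhouse k
      _ = 8 ^ k * (n : ℝ) ^ (k / 6 : ℝ) := by
          rw [mul_pow, ← Real.rpow_mul_natCast (by positivity), one_div_mul_eq_div]
  have hlin : (n : ℝ) ^ ((4 : ℕ) / 6 : ℝ) ≤ n :=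
    Real.rpow_le_self_of_one_le (mod_cast hn.ne_zero.bot_lt) (by norm_num)
  refine ⟨⟨(p, r), s⟩, mem_depressedCoeffs_natFloor ?_ ?_ ?_ hdvd, b, hb,
    by simp [← map_minpoly_int, hmin, map_depressedQuartic]⟩
  · calc |(p : ℝ)| ≤ 6 * (8 ^ 2 * (n : ℝ) ^ ((2 : ℕ) / 6 : ℝ)) := hp.trans (by grw [hpow])
      _ = 384 * (n : ℝ) ^ (1 / 3 : ℝ) := by norm_num [← mul_assoc]
  · calc |(r : ℝ)| ≤ 4 * (8 ^ 3 * (n : ℝ) ^ ((3 : ℕ) / 6 : ℝ)) := hr.trans (by grw [hpow])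
      _ = 2048 * (n : ℝ) ^ (1 / 2 : ℝ) := by norm_num [← mul_assoc]
  · calc |(s : ℝ)| ≤ 8 ^ 4 * (n : ℝ) ^ ((4 : ℕ) / 6 : ℝ) := hs.trans (hpow 4)
      _ ≤ (4096 : ℕ) * n := by
          grw [hlin]
          norm_num

end

lemma IsQuarticOfDisc.numberField {n : ℕ} {K : Subfield ℂ} (hK : IsQuarticOfDisc n K) :
    NumberField K where
  to_finiteDimensional := finite_of_finrank_pos (by simp [hK.1])

lemma m₄_le_card_depressedCoeffs {n : ℕ} (hn : Squarefree n) :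
    m₄ n ≤ #(depressedCoeffs n ⌊384 * (n : ℝ) ^ (1 / 3 : ℝ)⌋₊
      ⌊2048 * (n : ℝ) ^ (1 / 2 : ℝ)⌋₊ 4096) := by
  have (u : Quotient (quarticSetoid n)) : NumberField u.out.1 := u.out.2.numberField
  choose t ht b hb hmin using fun u : Quotient (quarticSetoid n) ↦
    exists_minpoly_eq_depressedQuartic_mem_depressedCoeffs hn u.out.2.1 u.out.2.2
  have hinj : Function.Injective fun u ↦ (⟨t u, ht u⟩ : depressedCoeffs n _ _ _) := by
    intro u v huv
    have htuv : t u = t v := congrArg Subtype.val huv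
    obtain ⟨e⟩ := nonempty_algEquiv_of_minpoly_eq (hb u) (hb v) (by rw [hmin, hmin, htuv])
    rw [← Quotient.out_eq u, ← Quotient.out_eq v]
    exact Quotient.sound ⟨e.toRingEquiv⟩
  exact (Nat.card_le_card_of_injective _ hinj).trans_eq
    (by rw [Nat.card_eq_fintype_card, Fintype.card_coe])

lemma two_mul_natFloor_add_one_le {A x : ℝ} (hA : 0 ≤ A) (hx : 1 ≤ x) :
    2 * (⌊A * x⌋₊ : ℝ) + 1 ≤ (2 * A + 1) * x := by
  have := Nat.floor_le (show 0 ≤ A * x by positivity)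
  linarith

theorem quartic_field_count_general :
    ∃ C : ℝ, 0 < C ∧ ∀ n : ℕ, Squarefree n →
      (m₄ n : ℝ) ≤ C * 3 ^ #n.primeFactors * (n : ℝ) ^ (5 / 6 : ℝ) := by
  refine ⟨769 * 4097 * 8193, by norm_num, fun n hn ↦ ?_⟩
  have hn1 : (1 : ℝ) ≤ n := mod_cast hn.ne_zero.bot_lt
  have hcard := (m₄_le_card_depressedCoeffs hn).trans (card_depressedCoeffs_le hn _ _ _)
  calc (m₄ n : ℝ)
      ≤ (2 * ⌊384 * (n : ℝ) ^ (1 / 3 : ℝ)⌋₊ + 1) * (2 * ⌊2048 * (n : ℝ) ^ (1 / 2 : ℝ)⌋₊ + 1) *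
          ((2 * 4096 + 1) * 3 ^ #n.primeFactors) := by exact_mod_cast hcard
    _ ≤ ((2 * 384 + 1) * (n : ℝ) ^ (1 / 3 : ℝ)) * ((2 * 2048 + 1) * (n : ℝ) ^ (1 / 2 : ℝ)) *
          ((2 * 4096 + 1) * 3 ^ #n.primeFactors) := by
        gcongr <;>
        exact two_mul_natFloor_add_one_le (by norm_num) (Real.one_le_rpow hn1 (by norm_num))
    _ = 769 * 4097 * 8193 * 3 ^ #n.primeFactors *
          ((n : ℝ) ^ (1 / 3 : ℝ) * (n : ℝ) ^ (1 / 2 : ℝ)) := by ring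
    _ = 769 * 4097 * 8193 * 3 ^ #n.primeFactors * (n : ℝ) ^ (5 / 6 : ℝ) := by
        rw [← Real.rpow_add (by linarith)]
        norm_num

end

lemma rpow_le_rpow_mul_log_pow {x a b : ℝ} (hx : 2 ≤ x) (hab : a ≤ b) (k : ℕ) :
    x ^ a ≤ x ^ b * (Real.log x / Real.log 2) ^ k := by
  have hlog2 : 0 < Real.log 2 := Real.log_pos one_lt_two
  have hlog : 1 ≤ Real.log x / Real.log 2 :=
    (one_le_div hlog2).mpr (Real.log_le_log two_pos hx)
  calc x ^ a ≤ x ^ b := Real.rpow_le_rpow_of_exponent_le (by linarith) hab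
    _ ≤ x ^ b * (Real.log x / Real.log 2) ^ k :=
        le_mul_of_one_le_right (by positivity) (one_le_pow₀ hlog)

/-- **Theorem 2:** for `q` prime, the number of quartic number fields of discriminant
`-q` satisfies `m₄(-q) ≪ q^{7/8} (log q)⁴`, with an absolute implied constant. -/
theorem quartic_field_count :
    ∃ C : ℝ, 0 < C ∧ ∀ q : ℕ, q.Prime →
      (m₄ q : ℝ) ≤ C * (q : ℝ) ^ ((7 : ℝ) / 8) * Real.log q ^ 4 := by
  obtain ⟨C, hC, hcount⟩ := quartic_field_count_general
  refine ⟨C * 3 / Real.log 2 ^ 4, by positivity, fun q hq ↦ ?_⟩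
  have hq2 : (2 : ℝ) ≤ q := mod_cast hq.two_le
  calc (m₄ q : ℝ) ≤ C * 3 * (q : ℝ) ^ (5 / 6 : ℝ) := by
        simpa [hq.primeFactors] using hcount q hq.prime.squarefree
    _ ≤ C * 3 * ((q : ℝ) ^ ((7 : ℝ) / 8) * (Real.log q / Real.log 2) ^ 4) := by
        gcongr
        exact rpow_le_rpow_mul_log_pow hq2 (by norm_num) 4
    _ = C * 3 / Real.log 2 ^ 4 * (q : ℝ) ^ ((7 : ℝ) / 8) * Real.log q ^ 4 := by
        ring
end

section
/- Let c, e ∈ ℂ with e ≠ 0, and let (b_n)_{n≥0} be defined by b_0 = 1, b_1 = c, and b_{n+2} = c·b_{n+1} - e·b_n for n ≥ 0 (so Σ_{n≥0} b_n T^n = (1 - cT + eT²)^{-1}). Define polynomials P_n by P_0(x) = 1, P_1(x) = x, P_{n+1}(x) = (x-1)P_n(x) - P_{n-1}(x). Then for every n ≥ 0, b_{2n} = e^n · P_n(e^{-1} b_2). -/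
/-- The sequence of complex polynomial functions `P 0 = 1`, `P 1 = x`,
`P (n+2) (x) = (x - 1) * P (n+1) (x) - P n (x)`. -/
noncomputable def P : ℕ → ℂ → ℂ
  | 0 => fun _ => 1
  | 1 => fun x => x
  | (n + 2) => fun x => (x - 1) * P (n + 1) x - P n x

/-!
On a sequence with `b (n + 2) = c * b (n + 1) - e * b n` the shift operator `S` satisfies
`S² = cS - e`. Squaring `S² + e = cS` gives `S⁴ = (c² - 2e) S² - e²`, a recurrence for the
even-indexed terms. Here `b 2 = c² - e`, so `c² - 2e = e * (x - 1)` with `x = e⁻¹ * b 2`, and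
pulling the factor `eⁿ` out of `b (2 * n)` leaves exactly the recurrence of `P n x`.
-/

section CommRing

variable {R : Type*} [CommRing R] {c e : R} {b : ℕ → R}

theorem add_four_eq_of_add_two_eq (hrec : ∀ n, b (n + 2) = c * b (n + 1) - e * b n) (n : ℕ) :
    b (n + 4) = (c ^ 2 - 2 * e) * b (n + 2) - e ^ 2 * b n := by
  linear_combination hrec (n + 2) + c * hrec (n + 1) + e * hrec n

theorem euler_factor_even_coeff_general {x : R} {p : ℕ → R}
    (hb0 : b 0 = 1) (hb1 : b 1 = c) (hrec : ∀ n, b (n + 2) = c * b (n + 1) - e * b n)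
    (hp0 : p 0 = 1) (hp1 : p 1 = x) (hp : ∀ n, p (n + 2) = (x - 1) * p (n + 1) - p n)
    (hx : e * x = b 2) (n : ℕ) : b (2 * n) = e ^ n * p n := by
  have coeff_eq : c ^ 2 - 2 * e = e * (x - 1) := by
    linear_combination -hx - hrec 0 - c * hb1 + e * hb0
  induction n using Nat.twoStepInduction with
  | zero => simp [hb0, hp0]
  | one => simp [hp1, hx]
  | more n ih ih_succ =>
    calc b (2 * (n + 2))
        = (c ^ 2 - 2 * e) * b (2 * (n + 1)) - e ^ 2 * b (2 * n) :=
          add_four_eq_of_add_two_eq hrec (2 * n)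
      _ = e * (x - 1) * (e ^ (n + 1) * p (n + 1)) - e ^ 2 * (e ^ n * p n) := by
          rw [coeff_eq, ih, ih_succ]
      _ = e ^ (n + 2) * ((x - 1) * p (n + 1) - p n) := by ring
      _ = e ^ (n + 2) * p (n + 2) := by rw [hp]

end CommRing

/-- Let `b` be the sequence of power series coefficients of the Euler factor
`(1 - c T + e T²)⁻¹`, i.e. `b 0 = 1`, `b 1 = c` and `b (n+2) = c * b (n+1) - e * b n`
(as occurs for the Fourier coefficients `a_f(pⁿ)` of a newform with `a_f(p) = c` and
character value `ε(p) = e ≠ 0`).  Then `b (2n) = eⁿ * P n (e⁻¹ * b 2)` for all `n`. -/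
theorem euler_factor_even_coeff (c e : ℂ) (he : e ≠ 0) (b : ℕ → ℂ)
    (hb0 : b 0 = 1) (hb1 : b 1 = c)
    (hrec : ∀ n : ℕ, b (n + 2) = c * b (n + 1) - e * b n) :
    ∀ n : ℕ, b (2 * n) = e ^ n * P n (e⁻¹ * b 2) :=
  euler_factor_even_coeff_general (p := (P · (e⁻¹ * b 2))) hb0 hb1 hrec rfl rfl (fun _ ↦ rfl)
    (mul_inv_cancel_left₀ he (b 2))
end

section
/- Let q be a positive integer and Y > 0, and set P(Y) = {z in the upper half-plane : 0 < Re z ≤ 1, Im z > Y}. Then for every z ∈ P(Y), the number of elements γ of Γ₀(q)/{±1} with γz ∈ P(Y) is at most 1 + 3/(qY). -/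
open UpperHalfPlane MatrixGroups CongruenceSubgroup

/-- The region `P(Y) = {z ∈ ℍ : 0 < Re z ≤ 1, Im z > Y}`. -/
def strip (Y : ℝ) : Set UpperHalfPlane := {z | 0 < z.re ∧ z.re ≤ 1 ∧ Y < z.im}

theorem neg_one_mem_Gamma0 (q : ℕ) : (-1 : SL(2, ℤ)) ∈ Gamma0 q := by
  have : ((-1 : SL(2, ℤ)) : Matrix (Fin 2) (Fin 2) ℤ) 1 0 = 0 := by
    simp [Matrix.SpecialLinearGroup.coe_neg]
  simp [Gamma0_mem, this]

/-- The subgroup `{±1}` of `Γ₀(q)`. -/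
def pmOne (q : ℕ) : Subgroup (Gamma0 q) :=
  Subgroup.zpowers (⟨-1, neg_one_mem_Gamma0 q⟩ : Gamma0 q)

/-!
An element of `Γ₀(q)` taking `z` into `P(Y)` is determined by its bottom row `(c, d)`: two elements
with equal bottom rows differ by an integer translation, and `P(Y)` has width one and is half-open.
Since `Im (γ z) = Im z / |c z + d|²`, the row satisfies `|c z + d| < A := √(Im z / Y)`, that is,
`|c| Im z < A` and `|c Re z + d| < A`. Modulo sign either `(c, d) = (0, 1)`, or `c = q k` with
`0 < k < A / (q Im z)`, and then there are at most `2 A + 1` choices of `d`. If `Im z ≥ Y` then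
`A ≥ 1`, so the total is at most `1 + 3 A² / (q Im z) = 1 + 3 / (q Y)`. For an arbitrary `z` whose
orbit meets `P(Y)`, replace `z` by a point of its orbit in `P(Y)`.
-/

section LatticePoints

variable {R : Type*} [Field R] [LinearOrder R] [IsStrictOrderedRing R] [FloorRing R]

theorem card_Ioo_floor_ceil_le {a b : R} (hab : a ≤ b) :
    ((Finset.Ioo ⌊a⌋ ⌈b⌉).card : R) ≤ b - a + 1 := by
  have ha := Int.lt_floor_add_one a
  have hb := Int.ceil_lt_add_one b
  have toNat_le : (((⌈b⌉ - ⌊a⌋ - 1).toNat : ℤ) : R) ≤ b - a + 1 := by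
    rw [Int.toNat_eq_max]
    push_cast
    exact max_le (by linarith) (by linarith)
  rw [Int.card_Ioo]
  exact_mod_cast toNat_le

/-- The integer points `(k, d)` with `k > 0` of the parallelogram `k h ≤ A`, `|k t + d| < B`. -/
noncomputable def latticeParallelogram (t h A B : R) : Finset (ℤ × ℤ) :=
  (Finset.Ioc 0 ⌊A / h⌋).biUnion fun k => {k} ×ˢ Finset.Ioo ⌊-B - k * t⌋ ⌈B - k * t⌉

theorem mem_latticeParallelogram {t h A B : R} (hh : 0 < h) {p : ℤ × ℤ} :
    p ∈ latticeParallelogram t h A B ↔ 0 < p.1 ∧ p.1 * h ≤ A ∧ |p.1 * t + p.2| < B := by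
  have floor_iff : p.1 ≤ ⌊A / h⌋ ↔ p.1 * h ≤ A := by rw [Int.le_floor, le_div_iff₀ hh]
  have abs_iff : |p.1 * t + p.2| < B ↔ -B - p.1 * t < p.2 ∧ p.2 < B - p.1 * t := by
    rw [abs_lt, sub_lt_iff_lt_add', lt_sub_iff_add_lt']
  simp only [latticeParallelogram, Finset.mem_biUnion, Finset.mem_Ioc, Finset.mem_product,
    Finset.mem_singleton, Finset.mem_Ioo, Int.floor_lt, Int.lt_ceil, abs_iff, ← floor_iff]
  grind

theorem card_latticeParallelogram_le (t : R) {h A B : R} (hh : 0 < h) (hA : 0 ≤ A) (hB : 0 ≤ B) :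
    ((latticeParallelogram t h A B).card : R) ≤ A / h * (2 * B + 1) := by
  have card_row (k : ℤ) :
      ((({k} : Finset ℤ) ×ˢ Finset.Ioo ⌊-B - k * t⌋ ⌈B - k * t⌉).card : R) ≤ 2 * B + 1 := by
    rw [Finset.card_product, Finset.card_singleton, one_mul]
    exact (card_Ioo_floor_ceil_le (by linarith)).trans_eq (by ring)
  have card_rows : ((Finset.Ioc 0 ⌊A / h⌋).card : R) ≤ A / h := by
    rw [Int.card_Ioc, sub_zero, ← Int.cast_natCast,
      Int.toNat_of_nonneg (Int.floor_nonneg.mpr (by positivity))]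
    exact Int.floor_le _
  calc ((latticeParallelogram t h A B).card : R)
      ≤ ∑ k ∈ Finset.Ioc 0 ⌊A / h⌋,
          ((({k} : Finset ℤ) ×ˢ Finset.Ioo ⌊-B - k * t⌋ ⌈B - k * t⌉).card : R) := by
        exact_mod_cast Finset.card_biUnion_le
    _ ≤ (Finset.Ioc 0 ⌊A / h⌋).card • (2 * B + 1) := Finset.sum_le_card_nsmul _ _ _
        fun k _ => card_row k
    _ ≤ A / h * (2 * B + 1) := by
        rw [nsmul_eq_mul]
        gcongr

end LatticePoints

section BottomRow

theorem exists_eq_T_zpow_mul_of_bottom_row_eq {g h : SL(2, ℤ)} (hrow : g 1 = h 1) :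
    ∃ n : ℤ, g = ModularGroup.T ^ n * h := by
  have h_c : g 1 0 = h 1 0 := congrFun hrow 0
  have h_d : g 1 1 = h 1 1 := congrFun hrow 1
  have det_g := g.det_coe
  have det_h := h.det_coe
  rw [Matrix.det_fin_two] at det_g det_h
  rw [h_c, h_d] at det_g
  have row_zero (n : ℤ) (j : Fin 2) : (ModularGroup.T ^ n * h) 0 j = h 0 j + n * h 1 j := by
    simp [ModularGroup.coe_T_zpow, Matrix.mul_apply]
  refine ⟨g 0 1 * h 0 0 - g 0 0 * h 0 1, Matrix.SpecialLinearGroup.ext _ _ fun i j => ?_⟩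
  match i with
  | 0 =>
    rw [row_zero]
    match j with
    | 0 => linear_combination (-g 0 0) * det_h + h 0 0 * det_g
    | 1 => linear_combination (-g 0 1) * det_h + h 0 1 * det_g
  | 1 => rw [ModularGroup.T_pow_mul_apply_one, hrow]

theorem eq_zero_of_T_zpow_smul_mem_strip {Y : ℝ} {z : ℍ} {n : ℤ} (hz : z ∈ strip Y)
    (hn : ModularGroup.T ^ n • z ∈ strip Y) : n = 0 := by
  obtain ⟨re_pos, re_le, -⟩ := hz
  obtain ⟨re_pos', re_le', -⟩ := hn
  rw [ModularGroup.re_T_zpow_smul] at re_pos' re_le'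
  have n_lt : (n : ℝ) < 1 := by linarith
  have lt_n : (-1 : ℝ) < n := by linarith
  norm_cast at n_lt lt_n
  omega

theorem eq_of_bottom_row_eq_of_smul_mem_strip {Y : ℝ} {z : ℍ} {g h : SL(2, ℤ)}
    (hrow : g 1 = h 1) (hg : g • z ∈ strip Y) (hh : h • z ∈ strip Y) : g = h := by
  obtain ⟨n, rfl⟩ := exists_eq_T_zpow_mul_of_bottom_row_eq hrow
  rw [mul_smul] at hg
  rw [eq_zero_of_T_zpow_smul_mem_strip hh hg, zpow_zero, one_mul]

theorem norm_denom_lt_sqrt {Y : ℝ} (hY : 0 < Y) {z : ℍ} {g : SL(2, ℤ)} (hg : Y < (g • z).im) :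
    ‖denom g z‖ < √(z.im / Y) := by
  have normSq_pos : 0 < Complex.normSq (denom g z) := Complex.normSq_pos.mpr (denom_ne_zero g z)
  rw [ModularGroup.im_smul_eq_div_normSq, lt_div_comm₀ hY normSq_pos,
    Complex.normSq_eq_norm_sq] at hg
  exact Real.lt_sqrt_of_sq_lt hg

theorem abs_bottom_row_lt_sqrt {Y : ℝ} (hY : 0 < Y) {z : ℍ} {g : SL(2, ℤ)}
    (hg : Y < (g • z).im) :
    |g 1 0 * z.im| < √(z.im / Y) ∧ |g 1 0 * z.re + g 1 1| < √(z.im / Y) := by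
  have im_denom : (denom g z).im = g 1 0 * z.im := by simp [ModularGroup.denom_apply]
  have re_denom : (denom g z).re = g 1 0 * z.re + g 1 1 := by simp [ModularGroup.denom_apply]
  rw [← im_denom, ← re_denom]
  exact ⟨(Complex.abs_im_le_norm _).trans_lt (norm_denom_lt_sqrt hY hg),
    (Complex.abs_re_le_norm _).trans_lt (norm_denom_lt_sqrt hY hg)⟩

/-- The sign normalization of a bottom row: it singles out one element of each pair `±g`. -/
def HasNormalizedBottomRow (g : SL(2, ℤ)) : Prop :=
  0 < g 1 0 ∨ g 1 0 = 0 ∧ g 1 1 = 1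

theorem hasNormalizedBottomRow_or_neg (g : SL(2, ℤ)) :
    HasNormalizedBottomRow g ∨ HasNormalizedBottomRow (-g) := by
  simp only [HasNormalizedBottomRow, Matrix.SpecialLinearGroup.coe_neg, Matrix.neg_apply]
  rcases lt_trichotomy (g 1 0) 0 with c_neg | c_zero | c_pos
  · exact Or.inr (Or.inl (by omega))
  · have det_g := g.det_coe
    rw [Matrix.det_fin_two, c_zero, mul_zero, sub_zero] at det_g
    rcases Int.eq_one_or_neg_one_of_mul_eq_one' det_g with ⟨-, d_eq⟩ | ⟨-, d_eq⟩
    · exact Or.inl (Or.inr ⟨c_zero, d_eq⟩)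
    · exact Or.inr (Or.inr ⟨by omega, by omega⟩)
  · exact Or.inl (Or.inl c_pos)

end BottomRow

section Count

variable {q : ℕ} {Y : ℝ}

/-- The classes `±γ` in `Γ₀(q)/{±1}` with `γ z ∈ P(Y)`. -/
def stripTranslates (q : ℕ) (Y : ℝ) (z : ℍ) : Set (Gamma0 q ⧸ pmOne q) :=
  {x | ∃ γ : Gamma0 q, QuotientGroup.mk γ = x ∧ (γ : SL(2, ℤ)) • z ∈ strip Y}

/-- The sign-normalized `γ ∈ Γ₀(q)` with `γ z ∈ P(Y)`; they represent the elements of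
`stripTranslates q Y z`. -/
def normalizedStripTranslates (q : ℕ) (Y : ℝ) (z : ℍ) : Set (Gamma0 q) :=
  {γ | (γ : SL(2, ℤ)) • z ∈ strip Y ∧ HasNormalizedBottomRow γ}

theorem stripTranslates_subset_image_mk (z : ℍ) :
    stripTranslates q Y z ⊆ QuotientGroup.mk '' normalizedStripTranslates q Y z := by
  rintro _ ⟨γ, rfl, hγ⟩
  rcases hasNormalizedBottomRow_or_neg (γ : SL(2, ℤ)) with normalized | normalized
  · exact ⟨γ, ⟨hγ, normalized⟩, rfl⟩
  · have coe_neg : ((γ * ⟨-1, neg_one_mem_Gamma0 q⟩ : Gamma0 q) : SL(2, ℤ)) = -γ := by simp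
    refine ⟨γ * ⟨-1, neg_one_mem_Gamma0 q⟩, ⟨?_, ?_⟩, ?_⟩
    · rwa [coe_neg, ModularGroup.SL_neg_smul]
    · rwa [coe_neg]
    · exact QuotientGroup.mk_mul_of_mem γ (Subgroup.mem_zpowers _)

/-- The bottom row `(c, d)` of an element of `Γ₀(q)`, encoded as `(c / q, d)`. -/
def reducedBottomRow (γ : Gamma0 q) : ℤ × ℤ :=
  ((γ : SL(2, ℤ)) 1 0 / q, (γ : SL(2, ℤ)) 1 1)

theorem mul_reducedBottomRow_fst (γ : Gamma0 q) :
    q * (reducedBottomRow γ).1 = (γ : SL(2, ℤ)) 1 0 :=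
  Int.mul_ediv_cancel' ((ZMod.intCast_zmod_eq_zero_iff_dvd _ _).mp (Gamma0_mem.mp γ.2))

theorem injOn_reducedBottomRow (z : ℍ) :
    Set.InjOn reducedBottomRow (normalizedStripTranslates q Y z) := by
  intro γ hγ δ hδ hrow
  have bottom_row_eq : (γ : SL(2, ℤ)) 1 = (δ : SL(2, ℤ)) 1 := by
    ext j
    fin_cases j
    · exact (mul_reducedBottomRow_fst γ).symm.trans (hrow ▸ mul_reducedBottomRow_fst δ)
    · exact congrArg Prod.snd hrow
  exact Subtype.ext (eq_of_bottom_row_eq_of_smul_mem_strip bottom_row_eq hγ.1 hδ.1)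

theorem mapsTo_reducedBottomRow (hq : 0 < q) (hY : 0 < Y) (z : ℍ) :
    Set.MapsTo reducedBottomRow (normalizedStripTranslates q Y z)
      (insert (0, 1) (latticeParallelogram (q * z.re) (q * z.im) √(z.im / Y) √(z.im / Y)) :
        Finset (ℤ × ℤ)) := by
  rintro γ ⟨hγ, c_pos | ⟨c_zero, d_one⟩⟩
  · have c_eq := mul_reducedBottomRow_fst γ
    have c_eq_cast : (((γ : SL(2, ℤ)) 1 0 : ℤ) : ℝ) = q * (reducedBottomRow γ).1 := by
      exact_mod_cast c_eq.symm
    obtain ⟨c_im_lt, re_lt⟩ := abs_bottom_row_lt_sqrt hY hγ.2.2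
    rw [c_eq_cast] at c_im_lt re_lt
    refine Finset.mem_insert_of_mem <| (mem_latticeParallelogram (by positivity)).mpr ⟨?_, ?_, ?_⟩
    · exact pos_of_mul_pos_right (c_eq ▸ c_pos) (Int.natCast_nonneg q)
    · exact (le_of_eq (by ring)).trans ((le_abs_self _).trans c_im_lt.le)
    · rwa [mul_left_comm, ← mul_assoc]
  · simp [reducedBottomRow, c_zero, d_one]

theorem stripTranslates_finite_and_ncard_le (hq : 0 < q) (hY : 0 < Y) (z : ℍ) :
    (stripTranslates q Y z).Finite ∧ ((stripTranslates q Y z).ncard : ℝ) ≤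
      1 + √(z.im / Y) / (q * z.im) * (2 * √(z.im / Y) + 1) := by
  set P := latticeParallelogram (q * z.re) (q * z.im) √(z.im / Y) √(z.im / Y)
  have maps := mapsTo_reducedBottomRow hq hY z
  have inj := injOn_reducedBottomRow (q := q) (Y := Y) z
  have normalized_finite : (normalizedStripTranslates q Y z).Finite :=
    Set.Finite.of_injOn maps inj (Finset.finite_toSet _)
  have image_finite := normalized_finite.image (QuotientGroup.mk (s := pmOne q))
  have ncard_le : (stripTranslates q Y z).ncard ≤ P.card + 1 :=
    calc (stripTranslates q Y z).ncard
        ≤ (QuotientGroup.mk (s := pmOne q) '' normalizedStripTranslates q Y z).ncard :=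
          Set.ncard_le_ncard (stripTranslates_subset_image_mk z) image_finite
      _ ≤ (normalizedStripTranslates q Y z).ncard := Set.ncard_image_le normalized_finite
      _ ≤ (insert (0, 1) P).card := by
          rw [← Set.ncard_coe_finset]
          exact Set.ncard_le_ncard_of_injOn _ maps inj (Finset.finite_toSet _)
      _ ≤ P.card + 1 := Finset.card_insert_le _ _
  refine ⟨image_finite.subset (stripTranslates_subset_image_mk z), ?_⟩
  calc ((stripTranslates q Y z).ncard : ℝ) ≤ P.card + 1 := by exact_mod_cast ncard_le
    _ ≤ _ := by
      rw [add_comm]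
      gcongr
      exact card_latticeParallelogram_le _ (by positivity) (by positivity) (by positivity)

theorem sqrt_div_mul_two_mul_sqrt_add_one_le {y m : ℝ} (hY : 0 < Y) (hy : Y ≤ y) (hm : 0 ≤ m) :
    √(y / Y) / (m * y) * (2 * √(y / Y) + 1) ≤ 3 / (m * Y) := by
  have y_pos : 0 < y := hY.trans_le hy
  have one_le_sqrt : 1 ≤ √(y / Y) := Real.one_le_sqrt.mpr ((one_le_div hY).mpr hy)
  calc √(y / Y) / (m * y) * (2 * √(y / Y) + 1)
      ≤ √(y / Y) / (m * y) * (2 * √(y / Y) + √(y / Y)) := by gcongr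
    _ = 3 * √(y / Y) ^ 2 / (m * y) := by ring
    _ = 3 / (m * Y) := by
      rw [Real.sq_sqrt (by positivity)]
      field_simp

instance pmOne_normal (q : ℕ) : (pmOne q).Normal := by
  have le_center : pmOne q ≤ Subgroup.center (Gamma0 q) := by
    refine Subgroup.zpowers_le.mpr (Subgroup.mem_center_iff.mpr fun γ => Subtype.ext ?_)
    simp
  exact ⟨fun n hn γ => by
    rwa [Subgroup.mem_center_iff.mp (le_center hn) γ, mul_inv_cancel_right]⟩

theorem stripTranslates_eq_image_mul_right (γ : Gamma0 q) (z : ℍ) :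
    stripTranslates q Y z =
      (· * (γ : Gamma0 q ⧸ pmOne q)) '' stripTranslates q Y ((γ : SL(2, ℤ)) • z) := by
  ext x
  constructor
  · rintro ⟨δ, rfl, hδ⟩
    refine ⟨((δ * γ⁻¹ : Gamma0 q) : Gamma0 q ⧸ pmOne q), ⟨δ * γ⁻¹, rfl, ?_⟩, ?_⟩
    · simpa [← mul_smul] using hδ
    · simp
  · rintro ⟨_, ⟨δ, rfl, hδ⟩, rfl⟩
    exact ⟨δ * γ, rfl, by simpa [mul_smul] using hδ⟩

theorem count_in_strip_general (q : ℕ) (hq : 0 < q) (Y : ℝ) (hY : 0 < Y) (z : ℍ) :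
    (stripTranslates q Y z).Finite ∧
      ((stripTranslates q Y z).ncard : ℝ) ≤ 1 + 3 / (q * Y) := by
  rcases (stripTranslates q Y z).eq_empty_or_nonempty with empty | ⟨_, γ, -, hγ⟩
  · rw [empty]
    exact ⟨Set.finite_empty, by rw [Set.ncard_empty, Nat.cast_zero]; positivity⟩
  · obtain ⟨finite, ncard_le⟩ := stripTranslates_finite_and_ncard_le hq hY ((γ : SL(2, ℤ)) • z)
    rw [stripTranslates_eq_image_mul_right γ z,
      Set.ncard_image_of_injective _ (mul_left_injective _)]
    refine ⟨finite.image _, ncard_le.trans ?_⟩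
    gcongr
    exact sqrt_div_mul_two_mul_sqrt_add_one_le hY hγ.2.2.le q.cast_nonneg

end Count

/-- For a positive integer `q`, `Y > 0` and `z` in the region
`P(Y) = {z : 0 < Re z ≤ 1, Im z > Y}`, the number of elements `γ` of `Γ₀(q)/{±1}`
with `γ z ∈ P(Y)` is at most `1 + 3/(qY)`.  (Since `-1` acts trivially on the upper
half-plane, the condition `γ z ∈ P(Y)` is well defined on the quotient `Γ₀(q)/{±1}`;
it is expressed here via a representative.) -/
theorem count_in_strip (q : ℕ) (hq : 0 < q) (Y : ℝ) (hY : 0 < Y)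
    (z : UpperHalfPlane) (hz : z ∈ strip Y) :
    (Set.ncard {x : Gamma0 q ⧸ pmOne q |
        ∃ γ : Gamma0 q, QuotientGroup.mk γ = x ∧ ((γ : SL(2, ℤ)) • z) ∈ strip Y} : ℝ) ≤
      1 + 3 / (q * Y) :=
  (count_in_strip_general q hq Y hY z).2
end
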